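/- For every pair of nontrivial words w₁ ∈ F_{d₁} and w₂ ∈ F_{d₂}, there exists a natural number N such that for every integer n ≥ N, every element of SU(n) is a product g₁g₂ with g₁ ∈ w₁(SU(n)) and g₂ ∈ w₂(SU(n)); that is, SU(n) = w₁(SU(n))·w₂(SU(n)). -/

import Mathlib

/-- The set of `w`-values in the subgroup of `G` given by the set `S`:
elements obtained by evaluating the word `w` at a `d`-tuple of elements of `S`. -/
def wordValuesIn {d : ℕ} {G : Type*} [Group G] (w : FreeGroup (Fin d)) (S : Set G) : Set G :=
  {x | ∃ g : Fin d → G, (∀ i, g i ∈ S) ∧ FreeGroup.lift g w = x}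

/-- `SU(n)`, the special unitary group, as the subset of the unitary group consisting of
matrices of determinant 1. -/
def SU (n : ℕ) : Set (Matrix.unitaryGroup (Fin n) ℂ) :=
  {M | (M : Matrix (Fin n) (Fin n) ℂ).det = 1}

/-!
On `SU(2)`, the trace of a nontrivial word is a nonconstant continuous function with value `2` at
the identity, so the word takes every value `diag(z, z⁻¹)` with `z` close to `1`. For
`z = exp (π i / n)`, the image of `diag(z, z⁻¹)` in `SU(n)` under the symmetric power
`Sym ^ (n - 1)` has as eigenvalues the `n`-th roots of `(-1) ^ (n - 1)`, hence is conjugate to the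
matrix `C` of an `n`-cycle, up to a scalar factor. So for large `n` every conjugate of `C` is a
value of `w₁` and of `w₂⁻¹`. Finally, for a diagonal matrix `t` of determinant `1`, the matrix
`t * C` is conjugate to `C`, so `t = (t * C) * C⁻¹` is a product of the required kind, and every
element of `SU(n)` is conjugate to such a `t`.
-/

open Matrix Real Filter Topology

-- For an injection `h : ℂ → ℝ`, the matrix `h(A)` is Hermitian and `A` is a polynomial in it, so
-- the spectral theorem for Hermitian matrices applies.
open scoped Matrix.Norms.L2Operator in
theorem exists_eq_unitary_mul_diagonal_mul_star {ι : Type*} [Fintype ι] [DecidableEq ι]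
    (A : Matrix ι ι ℂ) (hA : IsStarNormal A) :
    ∃ (V : unitaryGroup ι ℂ) (d : ι → ℂ), A = V * diagonal d * star (V : Matrix ι ι ℂ) := by
  obtain ⟨⟨h, h_inj⟩⟩ : Nonempty (ℂ ↪ ℝ) :=
    Cardinal.le_def _ _ |>.mp (Cardinal.mk_complex.trans Cardinal.mk_real.symm).le
  have continuousOn (f : ℂ → ℂ) : ContinuousOn f (spectrum ℂ A) :=
    A.finite_spectrum.continuousOn f
  set H := cfc (fun z ↦ (h z : ℂ)) A with H_def
  have hH : IsHermitian H := by
    rw [IsHermitian, ← star_eq_conjTranspose, H_def, ← cfc_star]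
    simp
  obtain ⟨p, hp⟩ : ∃ p : Polynomial ℂ, ∀ z ∈ spectrum ℂ A, p.eval (h z : ℂ) = z :=
    ⟨Lagrange.interpolate A.finite_spectrum.toFinset (fun z ↦ (h z : ℂ)) id, fun z hz ↦
      Lagrange.eval_interpolate_at_node _ (fun _ _ _ _ hzw ↦ h_inj (Complex.ofReal_injective hzw))
        (A.finite_spectrum.mem_toFinset.mpr hz)⟩
  have A_eq : A = Polynomial.aeval H p := by
    rw [← cfc_polynomial p H hH.isSelfAdjoint.isStarNormal,
      H_def, ← cfc_comp' p.eval (fun z ↦ (h z : ℂ)) A p.continuous.continuousOn (continuousOn _),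
      cfc_congr (g := id) hp, cfc_id ℂ A]
  let φ := (Unitary.conjStarAlgAut ℂ _ hH.eigenvectorUnitary).toAlgEquiv.toAlgHom.comp
    (diagonalAlgHom (n := ι) (α := ℂ) ℂ)
  refine ⟨hH.eigenvectorUnitary, Polynomial.aeval (RCLike.ofReal ∘ hH.eigenvalues) p, ?_⟩
  calc
    A = Polynomial.aeval (φ (RCLike.ofReal ∘ hH.eigenvalues)) p := A_eq.trans <|
      congrArg (fun B ↦ Polynomial.aeval B p) hH.spectral_theorem
    _ = φ (Polynomial.aeval (RCLike.ofReal ∘ hH.eigenvalues) p) :=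
      Polynomial.aeval_algHom_apply φ _ p

theorem exists_comp_perm_eq_of_map_univ_eq {α β : Type*} [Fintype α] {f g : α → β}
    (h : Finset.univ.val.map f = Finset.univ.val.map g) : ∃ σ : Equiv.Perm α, g ∘ σ = f := by
  classical
  have card_fiber_eq (b : β) : Fintype.card {a // f a = b} = Fintype.card {a // g a = b} := by
    simpa only [Multiset.count_map, eq_comm (a := b), Fintype.card_subtype, Finset.card_def,
      Finset.filter_val] using congrArg (Multiset.count b) h
  exact ⟨Equiv.ofFiberEquiv fun b ↦ Fintype.equivOfCardEq (card_fiber_eq b),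
    funext (Equiv.ofFiberEquiv_map _)⟩

section DiagonalUnitary

variable {n : Type*} [Fintype n] [DecidableEq n]

/-- The diagonal unitary matrix with the given diagonal entries of modulus one. -/
def diagonalUnitary : (n → Circle) →* unitaryGroup n ℂ where
  toFun d := ⟨diagonal fun i ↦ (d i : ℂ), mem_unitaryGroup_iff.mpr <| by
    simp [star_eq_conjTranspose, diagonal_conjTranspose, Pi.star_def, Complex.mul_conj]⟩
  map_one' := Subtype.ext <| by simp
  map_mul' d e := Subtype.ext <| by simp

theorem coe_diagonalUnitary (d : n → Circle) :
    (diagonalUnitary d : Matrix n n ℂ) = diagonal fun i ↦ (d i : ℂ) := rfl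

theorem continuous_diagonalUnitary :
    Continuous (diagonalUnitary : (n → Circle) → unitaryGroup n ℂ) :=
  .subtype_mk (Continuous.matrix_diagonal (by fun_prop)) _

theorem isConj_diagonalUnitary_const_mul (z : Circle) {U V : unitaryGroup n ℂ} (h : IsConj U V) :
    IsConj (diagonalUnitary (fun _ ↦ z) * U) (diagonalUnitary (fun _ ↦ z) * V) := by
  have commute (W : unitaryGroup n ℂ) : Commute (diagonalUnitary fun _ ↦ z) W :=
    Subtype.ext <| (scalar_commute (z : ℂ) (fun _ ↦ mul_comm _ _) (W : Matrix n n ℂ)).eq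
  obtain ⟨C, rfl⟩ := isConj_iff.mp h
  refine isConj_iff.mpr ⟨C, ?_⟩
  rw [← mul_assoc, ← (commute C).eq, mul_assoc, mul_assoc, mul_assoc]

/-- The unitary permutation matrix whose `i`-th row is the `σ i`-th standard basis vector. -/
def permUnitary (σ : Equiv.Perm n) : unitaryGroup n ℂ :=
  ⟨σ.permMatrix ℂ, mem_unitaryGroup_iff.mpr <| by
    rw [star_eq_conjTranspose, conjTranspose_permMatrix, ← permMatrix_mul, inv_mul_cancel,
      permMatrix_one]⟩

theorem permUnitary_mul_diagonalUnitary (σ : Equiv.Perm n) (d : n → Circle) :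
    permUnitary σ * diagonalUnitary d = diagonalUnitary (d ∘ σ) * permUnitary σ :=
  Subtype.ext <| by
    ext i j
    obtain rfl | hij := eq_or_ne (σ i) j <;>
      simp [permUnitary, coe_diagonalUnitary, *]

theorem exists_isConj_diagonalUnitary (U : unitaryGroup n ℂ) :
    ∃ d : n → Circle, IsConj (diagonalUnitary d) U := by
  obtain ⟨V, d, hU⟩ := exists_eq_unitary_mul_diagonal_mul_star (U : Matrix n n ℂ)
    inferInstance
  have diagonal_mem : diagonal d ∈ unitaryGroup n ℂ := by
    convert (V⁻¹ * U * V).2 using 1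
    simp [hU, mul_assoc, ← mul_assoc (star (V : Matrix n n ℂ))]
  have norm_eq_one (i : n) : ‖d i‖ = 1 := by
    refine CStarRing.norm_of_mem_unitary (Unitary.mem_iff_self_mul_star.mpr ?_)
    simpa [star_eq_conjTranspose, diagonal_conjTranspose] using
      congr_fun₂ (mem_unitaryGroup_iff.mp diagonal_mem) i i
  exact ⟨fun i ↦ ⟨d i, mem_sphere_zero_iff_norm.mpr (norm_eq_one i)⟩,
    isConj_iff.mpr ⟨V, Subtype.ext hU.symm⟩⟩

theorem charpoly_eq_of_isConj {U V : unitaryGroup n ℂ} (h : IsConj U V) :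
    (U : Matrix n n ℂ).charpoly = (V : Matrix n n ℂ).charpoly := by
  obtain ⟨C, rfl⟩ := isConj_iff.mp h
  rw [Submonoid.coe_mul, charpoly_mul_comm, ← Submonoid.coe_mul, inv_mul_cancel_left]

theorem isConj_of_charpoly_eq {U V : unitaryGroup n ℂ}
    (h : (U : Matrix n n ℂ).charpoly = (V : Matrix n n ℂ).charpoly) : IsConj U V := by
  obtain ⟨d, hd⟩ := exists_isConj_diagonalUnitary U
  obtain ⟨e, he⟩ := exists_isConj_diagonalUnitary V
  have roots_charpoly (d : n → Circle) : (diagonalUnitary d : Matrix n n ℂ).charpoly.roots =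
      (Finset.univ.val.map d).map Circle.coeHom := by
    rw [coe_diagonalUnitary, charpoly_diagonal, Multiset.map_map,
      ← Polynomial.roots_multiset_prod_X_sub_C (Multiset.map _ _), Multiset.map_map]
    rfl
  obtain ⟨σ, rfl⟩ : ∃ σ : Equiv.Perm n, e ∘ σ = d := by
    refine exists_comp_perm_eq_of_map_univ_eq <|
      Multiset.map_injective (f := Circle.coeHom) Circle.coe_injective ?_
    rw [← roots_charpoly, ← roots_charpoly, charpoly_eq_of_isConj hd, charpoly_eq_of_isConj he, h]
  exact hd.symm.trans <| .trans (.symm <| isConj_iff.mpr ⟨permUnitary σ,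
    mul_inv_eq_of_eq_mul (permUnitary_mul_diagonalUnitary σ e)⟩) he

/-- The isomorphism of unitary groups induced by a bijection of the index sets. -/
def reindexUnitary {n' : Type*} [Fintype n'] [DecidableEq n'] (e : n ≃ n') :
    unitaryGroup n ℂ →* unitaryGroup n' ℂ where
  toFun U := ⟨reindex e e (U : Matrix n n ℂ), mem_unitaryGroup_iff.mpr <| by
    rw [star_eq_conjTranspose, conjTranspose_reindex, ← star_eq_conjTranspose]
    simp⟩
  map_one' := Subtype.ext <| by simp
  map_mul' U V := Subtype.ext <| by simp

theorem diagonalUnitary_mem_SU_iff {k : ℕ} {d : Fin k → Circle} :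
    diagonalUnitary d ∈ SU k ↔ ∏ i, d i = 1 := by
  rw [SU, Set.mem_ofPred_eq, coe_diagonalUnitary, det_diagonal, ← Circle.coe_inj, Circle.coe_one]
  exact Eq.congr_left (map_prod Circle.coeHom d _).symm

theorem mem_SU_iff_of_isConj {k : ℕ} {U V : unitaryGroup (Fin k) ℂ} (h : IsConj U V) :
    U ∈ SU k ↔ V ∈ SU k := by
  simp only [SU, Set.mem_ofPred_eq, det_eq_sign_charpoly_coeff, charpoly_eq_of_isConj h]

end DiagonalUnitary

section CyclicShift

variable {m : ℕ}

theorem isConj_permUnitary_finRotate {ζ : Circle} (hζ : IsPrimitiveRoot ζ (m + 1)) :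
    IsConj (diagonalUnitary fun k : Fin (m + 1) ↦ ζ ^ (k : ℕ))
      (permUnitary (finRotate (m + 1))) := by
  set F : Matrix (Fin (m + 1)) (Fin (m + 1)) ℂ :=
    (vandermonde fun k ↦ (ζ : ℂ) ^ (k : ℕ))ᵀ with F_def
  have isUnit_F : IsUnit F.det := by
    rw [F_def, det_transpose, isUnit_iff_ne_zero, det_vandermonde_ne_zero_iff]
    exact fun k l hkl ↦ Fin.ext <| hζ.pow_inj k.2 l.2 <| Circle.coe_injective <| by simpa using hkl
  have shift_mul : (permUnitary (finRotate (m + 1)) : Matrix _ _ ℂ) * F =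
      F * diagonal fun k : Fin (m + 1) ↦ (ζ : ℂ) ^ (k : ℕ) := by
    ext j k
    obtain rfl | ⟨j, rfl⟩ := j.eq_castSucc_or_eq_last.symm
    · have pow_mul_eq_one : ((ζ : ℂ) ^ (k : ℕ)) ^ m * ζ ^ (k : ℕ) = 1 := by
        rw [← pow_succ, pow_right_comm, ← Circle.coe_pow, hζ.pow_eq_one, Circle.coe_one, one_pow]
      simp [permUnitary, F_def, PEquiv.toMatrix_toPEquiv_mul, pow_mul_eq_one]
    · simp [permUnitary, F_def, PEquiv.toMatrix_toPEquiv_mul, pow_succ]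
  refine isConj_of_charpoly_eq ?_
  rw [coe_diagonalUnitary]
  calc
    (diagonal fun k : Fin (m + 1) ↦ ((ζ ^ (k : ℕ) : Circle) : ℂ)).charpoly
    _ = (F⁻¹ * (F * diagonal fun k : Fin (m + 1) ↦ (ζ : ℂ) ^ (k : ℕ))).charpoly := by
      simp [nonsing_inv_mul_cancel_left F _ isUnit_F]
    _ = _ := by
      rw [← shift_mul, charpoly_mul_comm, mul_assoc, mul_nonsing_inv F isUnit_F, mul_one]

/-- The cyclic permutation matrix of size `m + 1`, multiplied by the scalar `z ^ m` with
`z = exp (π i / (m + 1))`; the scalar makes it conjugate to the image of `diag(z, z⁻¹)` under the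
`m`-th symmetric power. -/
noncomputable def twistedCycle (m : ℕ) : unitaryGroup (Fin (m + 1)) ℂ :=
  diagonalUnitary (fun _ ↦ Circle.exp (π / (m + 1)) ^ m) * permUnitary (finRotate (m + 1))

theorem isConj_diagonalUnitary_twistedCycle (m : ℕ) :
    IsConj (diagonalUnitary fun k : Fin (m + 1) ↦
      Circle.exp (π / (m + 1)) ^ (m - k : ℕ) * (Circle.exp (π / (m + 1)))⁻¹ ^ (k : ℕ))
      (twistedCycle m) := by
  set z := Circle.exp (π / (m + 1)) with z_def
  have isPrimitiveRoot_sq : IsPrimitiveRoot (z ^ 2) (m + 1) := by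
    refine .of_map_of_injective (f := Circle.coeHom) ?_ Circle.coe_injective
    convert Complex.isPrimitiveRoot_exp (m + 1) m.succ_ne_zero using 1
    change ((z ^ 2 : Circle) : ℂ) = _
    rw [z_def, ← Circle.exp_nsmul, Circle.coe_exp]
    push_cast [nsmul_eq_mul]
    ring_nf
  rw [twistedCycle, ← z_def]
  convert isConj_diagonalUnitary_const_mul (z ^ m)
    (isConj_permUnitary_finRotate isPrimitiveRoot_sq.inv) using 1
  rw [← map_mul]
  congr 1 with k
  rw [Pi.mul_apply, pow_sub z k.is_le, inv_pow, inv_pow, ← pow_mul, mul_comm 2, pow_mul, sq,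
    mul_inv, mul_assoc]

theorem exists_div_comp_finRotate_eq {G : Type*} [CommGroup G] {t : Fin (m + 1) → G}
    (ht : ∏ j, t j = 1) : ∃ s : Fin (m + 1) → G, s / s ∘ finRotate (m + 1) = t := by
  refine ⟨fun j ↦ (Fin.partialProd t j.castSucc)⁻¹, funext fun j ↦ ?_⟩
  have partialProd_finRotate :
      Fin.partialProd t (finRotate (m + 1) j).castSucc = Fin.partialProd t j.succ := by
    obtain rfl | ⟨j, rfl⟩ := j.eq_castSucc_or_eq_last.symm
    · rw [finRotate_last, Fin.castSucc_zero, Fin.partialProd_zero, Fin.succ_last, Fin.partialProd,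
        Fin.val_last, List.take_of_length_le List.length_ofFn.le, List.prod_ofFn, ht]
    · simp
  rw [Pi.div_apply, Function.comp_apply, partialProd_finRotate, inv_div_inv, div_eq_inv_mul,
    Fin.partialProd_right_inv]

theorem isConj_twistedCycle_diagonalUnitary_mul {t : Fin (m + 1) → Circle}
    (ht : ∏ j, t j = 1) : IsConj (twistedCycle m) (diagonalUnitary t * twistedCycle m) := by
  obtain ⟨s, rfl⟩ := exists_div_comp_finRotate_eq ht
  have isConj_shift : IsConj (permUnitary (finRotate (m + 1)))
      (diagonalUnitary (s / s ∘ finRotate (m + 1)) * permUnitary (finRotate (m + 1))) := by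
    refine isConj_iff.mpr ⟨diagonalUnitary s, mul_inv_eq_of_eq_mul ?_⟩
    rw [mul_assoc, permUnitary_mul_diagonalUnitary, ← mul_assoc, ← map_mul, div_mul_cancel]
  rw [twistedCycle, ← mul_assoc, ← map_mul, mul_comm (s / _), map_mul, mul_assoc]
  exact isConj_diagonalUnitary_const_mul _ isConj_shift

theorem exists_eq_mul_inv_of_mem_SU {x : unitaryGroup (Fin (m + 1)) ℂ} (hx : x ∈ SU (m + 1)) :
    ∃ y z, IsConj (twistedCycle m) y ∧ IsConj (twistedCycle m) z ∧ x = y * z⁻¹ := by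
  obtain ⟨t, htx⟩ := exists_isConj_diagonalUnitary x
  have prod_t : ∏ j, t j = 1 := diagonalUnitary_mem_SU_iff.mp <| (mem_SU_iff_of_isConj htx).mpr hx
  obtain ⟨V, rfl⟩ := isConj_iff.mp htx
  refine ⟨_, _, (isConj_twistedCycle_diagonalUnitary_mul prod_t).trans (isConj_iff.mpr ⟨V, rfl⟩),
    isConj_iff.mpr ⟨V, rfl⟩, ?_⟩
  group

end CyclicShift

section SymmetricPower

/-- For surjective `p`, the isometry `ℂ^β → ℂ^α` sending the basis vector at `b` to the normalized
sum of the basis vectors over the fiber of `p` at `b`; its range consists of the vectors that are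
constant on the fibers of `p`. -/
noncomputable def fiberIsometry {α β : Type*} [Fintype α] [DecidableEq β] (p : α → β) :
    Matrix α β ℂ :=
  of fun a b ↦ if p a = b then (√({a' | p a' = b} : Finset α).card : ℂ)⁻¹ else 0

section FiberIsometry

variable {α β : Type*} [Fintype α] [DecidableEq β] {p : α → β}

theorem conjTranspose_fiberIsometry_mul_apply {γ : Type*} (X : Matrix α γ ℂ) (b : β) (c : γ) :
    ((fiberIsometry p)ᴴ * X) b c =
      (√({a | p a = b} : Finset α).card : ℂ)⁻¹ * ∑ a with p a = b, X a c := by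
  simp [mul_apply, fiberIsometry, apply_ite, ite_mul, Finset.sum_filter, Finset.mul_sum]

theorem inv_sqrt_mul_self_mul_natCast {k : ℕ} (hk : k ≠ 0) :
    (√k : ℂ)⁻¹ * (√k : ℂ)⁻¹ * k = 1 := by
  rw [← mul_inv, ← Complex.ofReal_mul, Real.mul_self_sqrt k.cast_nonneg, Complex.ofReal_natCast,
    inv_mul_cancel₀ (Nat.cast_ne_zero.mpr hk)]

theorem conjTranspose_fiberIsometry_mul_self (hp : p.Surjective) :
    (fiberIsometry p)ᴴ * fiberIsometry p = 1 := by
  ext b b'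
  have card_ne_zero : ({a | p a = b} : Finset α).card ≠ 0 := by
    obtain ⟨a, ha⟩ := hp b
    exact Finset.card_ne_zero_of_mem (Finset.mem_filter_univ a |>.mpr ha)
  have sum_eq : ∑ a with p a = b, fiberIsometry p a b' =
      ∑ a with p a = b, if b = b' then (√({a | p a = b} : Finset α).card : ℂ)⁻¹ else 0 :=
    Finset.sum_congr rfl fun a ha ↦ by
      obtain rfl := Finset.mem_filter_univ a |>.mp ha
      simp only [fiberIsometry, of_apply]
      split_ifs with h <;> simp [h]
  rw [conjTranspose_fiberIsometry_mul_apply, sum_eq, Finset.sum_const, nsmul_eq_mul, one_apply,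
    mul_ite, mul_ite, mul_zero, mul_zero, mul_left_comm, mul_comm,
    inv_sqrt_mul_self_mul_natCast card_ne_zero]

theorem fiberIsometry_mul_conjTranspose_mul [Fintype β] {γ : Type*} {X : Matrix α γ ℂ}
    (hX : ∀ a a', p a = p a' → X a = X a') :
    fiberIsometry p * ((fiberIsometry p)ᴴ * X) = X := by
  ext a c
  have card_ne_zero : ({a' | p a' = p a} : Finset α).card ≠ 0 :=
    Finset.card_ne_zero_of_mem (Finset.mem_filter_univ a |>.mpr rfl)
  have sum_eq : ∑ a' with p a' = p a, X a' c = ∑ a' with p a' = p a, X a c :=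
    Finset.sum_congr rfl fun a' ha' ↦ congr_fun (hX a' a (Finset.mem_filter_univ a' |>.mp ha')) c
  calc
    (fiberIsometry p * ((fiberIsometry p)ᴴ * X)) a c
    _ = (√({a' | p a' = p a} : Finset α).card : ℂ)⁻¹ * ((fiberIsometry p)ᴴ * X) (p a) c := by
      rw [mul_apply, Finset.sum_eq_single (p a)] <;> simp +contextual [fiberIsometry, eq_comm]
    _ = X a c := by
      rw [conjTranspose_fiberIsometry_mul_apply, sum_eq, Finset.sum_const, nsmul_eq_mul,
        ← mul_assoc, ← mul_assoc, inv_sqrt_mul_self_mul_natCast card_ne_zero, one_mul]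

end FiberIsometry

/-- The matrix of the `m`-th tensor power `A ⊗ ⋯ ⊗ A`, in the bases of pure tensors of basis
vectors. -/
def tensorPower {α β R : Type*} [CommSemiring R] (m : ℕ) (A : Matrix α β R) :
    Matrix (Fin m → α) (Fin m → β) R :=
  of fun f h ↦ ∏ i, A (f i) (h i)

section TensorPower

variable {α β γ R : Type*} [CommSemiring R] {m : ℕ}

theorem tensorPower_mul [Fintype β] (A : Matrix α β R) (B : Matrix β γ R) :
    tensorPower m (A * B) = tensorPower m A * tensorPower m B := by
  classical
  ext f h
  simp [tensorPower, mul_apply, Finset.prod_univ_sum, Finset.prod_mul_distrib]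

theorem tensorPower_conjTranspose [StarRing R] (A : Matrix α β R) :
    tensorPower m Aᴴ = (tensorPower m A)ᴴ := by
  ext f h
  simp [tensorPower, star_prod]

theorem tensorPower_diagonal [DecidableEq α] (d : α → R) :
    tensorPower m (diagonal d) = diagonal fun f ↦ ∏ i, d (f i) := by
  ext f h
  obtain rfl | hfh := eq_or_ne f h
  · simp [tensorPower]
  · obtain ⟨i, hi⟩ := Function.ne_iff.mp hfh
    rw [diagonal_apply_ne _ hfh]
    exact Finset.prod_eq_zero (Finset.mem_univ i) (diagonal_apply_ne _ hi)

theorem tensorPower_comp_perm (A : Matrix α β R) (σ : Equiv.Perm (Fin m)) (f : Fin m → α)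
    (h : Fin m → β) : tensorPower m A (f ∘ σ) (h ∘ σ) = tensorPower m A f h :=
  Equiv.prod_comp σ fun i ↦ A (f i) (h i)

end TensorPower

/-- The unordered tuple underlying `f`. -/
def symOfFn {α : Type*} {m : ℕ} (f : Fin m → α) : Sym α m :=
  ⟨Finset.univ.val.map f, by simp⟩

theorem symOfFn_surjective {α : Type*} {m : ℕ} :
    (symOfFn : (Fin m → α) → Sym α m).Surjective := by
  rintro ⟨s, rfl⟩
  induction s using Quotient.inductionOn with | h l =>
  exact ⟨l.get, Subtype.ext <| by
    change Finset.univ.val.map l.get = l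
    rw [Fin.univ_val_map, List.ofFn_get]⟩

theorem symOfFn_comp_perm {α : Type*} {m : ℕ} (f : Fin m → α) (σ : Equiv.Perm (Fin m)) :
    symOfFn (f ∘ σ) = symOfFn f :=
  Subtype.ext <| by simpa [symOfFn, Function.comp_def] using Equiv.Perm.ofFn_comp_perm σ f

theorem exists_comp_perm_of_symOfFn_eq {α : Type*} {m : ℕ} {f g : Fin m → α}
    (h : symOfFn f = symOfFn g) : ∃ σ : Equiv.Perm (Fin m), g ∘ σ = f :=
  exists_comp_perm_eq_of_map_univ_eq (congrArg Subtype.val h)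

/-- The inclusion of the symmetric tensors, with orthonormal basis the normalized sums over orbits
of pure tensors of basis vectors, into `(ℂ^α)^{⊗ m}`. -/
noncomputable abbrev symIsometry (α : Type*) [Fintype α] [DecidableEq α] (m : ℕ) :
    Matrix (Fin m → α) (Sym α m) ℂ :=
  fiberIsometry symOfFn

/-- The matrix of the `m`-th symmetric power of `A`: the compression of `A ⊗ ⋯ ⊗ A` to the space of
symmetric tensors. -/
noncomputable def symPower {α : Type*} [Fintype α] [DecidableEq α] (m : ℕ) (A : Matrix α α ℂ) :
    Matrix (Sym α m) (Sym α m) ℂ :=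
  (symIsometry α m)ᴴ * (tensorPower m A * symIsometry α m)

section SymPower

variable {α : Type*} [Fintype α] [DecidableEq α] {m : ℕ}

theorem symIsometry_mul_symPower (A : Matrix α α ℂ) :
    symIsometry α m * symPower m A = tensorPower m A * symIsometry α m := by
  refine fiberIsometry_mul_conjTranspose_mul fun f g hfg ↦ funext fun s ↦ ?_
  obtain ⟨σ, rfl⟩ := exists_comp_perm_of_symOfFn_eq hfg
  have symIsometry_comp (h : Fin m → α) : symIsometry α m (h ∘ σ) s = symIsometry α m h s := by
    simp only [symIsometry, fiberIsometry, of_apply, symOfFn_comp_perm]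
  rw [mul_apply, mul_apply, ← (Equiv.arrowCongr σ (.refl α)).symm.sum_comp]
  exact Finset.sum_congr rfl fun h _ ↦
    congrArg₂ _ (tensorPower_comp_perm A σ g h) (symIsometry_comp h)

theorem symPower_mul (A B : Matrix α α ℂ) :
    symPower m (A * B) = symPower m A * symPower m B := by
  rw [symPower, tensorPower_mul, Matrix.mul_assoc, ← symIsometry_mul_symPower,
    ← Matrix.mul_assoc (tensorPower m A), ← Matrix.mul_assoc, symPower, symPower]

theorem symPower_conjTranspose (A : Matrix α α ℂ) : symPower m Aᴴ = (symPower m A)ᴴ := by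
  simp only [symPower, tensorPower_conjTranspose, conjTranspose_mul, conjTranspose_conjTranspose,
    Matrix.mul_assoc]

theorem symPower_diagonal (d : α → ℂ) :
    symPower m (diagonal d) = diagonal fun s : Sym α m ↦ ((s : Multiset α).map d).prod := by
  have tensorPower_mul_symIsometry : tensorPower m (diagonal d) * symIsometry α m =
      symIsometry α m * diagonal fun s : Sym α m ↦ ((s : Multiset α).map d).prod := by
    ext f s
    rw [tensorPower_diagonal, diagonal_mul, mul_diagonal, mul_comm]
    obtain rfl | hfs := eq_or_ne (symOfFn f) s
    · rw [symOfFn, Sym.coe_mk, Multiset.map_map]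
      rfl
    · simp [symIsometry, fiberIsometry, hfs]
  rw [symPower, tensorPower_mul_symIsometry, ← Matrix.mul_assoc,
    conjTranspose_fiberIsometry_mul_self symOfFn_surjective, Matrix.one_mul]

/-- The `m`-th symmetric power representation of the unitary group. -/
noncomputable def symPowerHom (α : Type*) [Fintype α] [DecidableEq α] (m : ℕ) :
    unitaryGroup α ℂ →* unitaryGroup (Sym α m) ℂ :=
  have symPower_one : symPower m (1 : Matrix α α ℂ) = 1 := by
    simpa using symPower_diagonal (m := m) (1 : α → ℂ)
  { toFun U := ⟨symPower m (U : Matrix α α ℂ), mem_unitaryGroup_iff.mpr <| by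
      rw [star_eq_conjTranspose, ← symPower_conjTranspose, ← symPower_mul, ← star_eq_conjTranspose,
        mem_unitaryGroup_iff.mp U.2, symPower_one]⟩
    map_one' := Subtype.ext symPower_one
    map_mul' U V := Subtype.ext <| symPower_mul _ _ }

end SymPower

end SymmetricPower

section SymPowerFinTwo

variable {m : ℕ}

/-- An unordered `m`-tuple in `Fin 2` is determined by the number of its entries equal to `1`. -/
noncomputable def finEquivSymFinTwo (m : ℕ) : Fin (m + 1) ≃ Sym (Fin 2) m :=
  .ofBijective
    (fun k ↦ ⟨.replicate (m - k) 0 + .replicate k 1, by simp [Nat.sub_add_cancel k.is_le]⟩) <| by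
    constructor
    · intro k l hkl
      simpa [Multiset.count_replicate, Fin.ext_iff] using
        congrArg (fun s : Sym (Fin 2) m ↦ Multiset.count 1 s.1) hkl
    · rintro ⟨s, rfl⟩
      have count_add_count : s.count 0 + s.count 1 = s.card := by
        rw [← Multiset.sum_count_eq_card (s := Finset.univ) fun _ _ ↦ Finset.mem_univ _,
          Fin.sum_univ_two]
      refine ⟨⟨s.count 1, Nat.lt_succ_of_le (s.count_le_card 1)⟩, Subtype.ext ?_⟩
      ext a
      fin_cases a
      · simp [Multiset.count_replicate, ← count_add_count]
      · simp [Multiset.count_replicate]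

theorem coe_finEquivSymFinTwo (k : Fin (m + 1)) :
    (finEquivSymFinTwo m k : Multiset (Fin 2)) = .replicate (m - k) 0 + .replicate k 1 := rfl

/-- The representation of `U(2)` on the `m`-th symmetric power of `ℂ²`. -/
noncomputable def symPowerFinTwo (m : ℕ) :
    unitaryGroup (Fin 2) ℂ →* unitaryGroup (Fin (m + 1)) ℂ :=
  (reindexUnitary (finEquivSymFinTwo m).symm).comp (symPowerHom (Fin 2) m)

theorem symPowerFinTwo_diagonalUnitary (d : Fin 2 → Circle) :
    symPowerFinTwo m (diagonalUnitary d) =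
      diagonalUnitary fun k : Fin (m + 1) ↦ d 0 ^ (m - k : ℕ) * d 1 ^ (k : ℕ) := by
  refine Subtype.ext ?_
  change reindex _ _ (symPower m (diagonal _)) = diagonal _
  rw [symPower_diagonal, reindex_apply, submatrix_diagonal_equiv]
  congr 1 with k
  simp [coe_finEquivSymFinTwo]

theorem mapsTo_symPowerFinTwo_SU : Set.MapsTo (symPowerFinTwo m) (SU 2) (SU (m + 1)) := by
  intro U hU
  obtain ⟨d, hd⟩ := exists_isConj_diagonalUnitary U
  rw [← mem_SU_iff_of_isConj hd, diagonalUnitary_mem_SU_iff, Fin.prod_univ_two] at hU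
  rw [← mem_SU_iff_of_isConj ((symPowerFinTwo m).map_isConj hd), symPowerFinTwo_diagonalUnitary,
    diagonalUnitary_mem_SU_iff]
  calc
    ∏ k : Fin (m + 1), d 0 ^ (m - k : ℕ) * d 1 ^ (k : ℕ)
    _ = (∏ k : Fin (m + 1), d 0 ^ (m - k : ℕ)) * ∏ k : Fin (m + 1), d 1 ^ (k : ℕ) :=
      Finset.prod_mul_distrib
    _ = ∏ k : Fin (m + 1), (d 0 * d 1) ^ (k : ℕ) := by
      rw [← Equiv.prod_comp Fin.revPerm]
      simp [mul_pow, Finset.prod_mul_distrib, Nat.sub_sub_self, Fin.is_le]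
    _ = 1 := by simp [hU]

end SymPowerFinTwo

section FreeGroup

variable {G H : Type*} [Group G] [Group H] {d : ℕ}

theorem freeGroup_lift_comp_apply {ι : Type*} (φ : G →* H) (g : ι → G) (w : FreeGroup ι) :
    FreeGroup.lift (φ ∘ g) w = φ (FreeGroup.lift g w) := by
  rw [← MonoidHom.comp_apply]
  congr 1
  ext i
  simp

theorem continuous_freeGroup_lift {ι X : Type*} [TopologicalSpace X] [TopologicalSpace G]
    [IsTopologicalGroup G] {g : X → ι → G} (hg : Continuous g) (w : FreeGroup ι) :
    Continuous fun x ↦ FreeGroup.lift (g x) w := by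
  induction w using FreeGroup.induction_on with
  | C1 => simpa only [map_one] using continuous_const
  | of i => simpa only [FreeGroup.lift_apply_of] using continuous_pi_iff.mp hg i
  | inv_of i hi => simpa only [map_inv, Pi.inv_def] using hi.inv
  | mul v w hv hw => simpa only [map_mul, Pi.mul_def] using hv.mul hw

theorem map_mem_wordValuesIn {S : Set G} {T : Set H} {φ : G →* H} (hφ : Set.MapsTo φ S T)
    {w : FreeGroup (Fin d)} {x : G} (hx : x ∈ wordValuesIn w S) : φ x ∈ wordValuesIn w T := by
  obtain ⟨g, hg, rfl⟩ := hx
  exact ⟨φ ∘ g, fun i ↦ hφ (hg i), freeGroup_lift_comp_apply φ g w⟩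

theorem inv_mem_wordValuesIn {S : Set G} {w : FreeGroup (Fin d)} {x : G}
    (hx : x ∈ wordValuesIn w⁻¹ S) : x⁻¹ ∈ wordValuesIn w S := by
  obtain ⟨g, hg, rfl⟩ := hx
  exact ⟨g, hg, by rw [map_inv, inv_inv]⟩

theorem wordValuesIn_SU_subset {n : ℕ} (w : FreeGroup (Fin d)) : wordValuesIn w (SU n) ⊆ SU n := by
  rintro _ ⟨g, hg, rfl⟩
  have det_comp_lift_eq :
      (detMonoidHom.comp (unitaryGroup (Fin n) ℂ).subtype).comp (FreeGroup.lift g) = 1 :=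
    FreeGroup.ext_hom _ _ fun i ↦ by simpa using! hg i
  exact DFunLike.congr_fun det_comp_lift_eq w

theorem mem_wordValuesIn_SU_of_isConj {n : ℕ} {w : FreeGroup (Fin d)}
    {x y : unitaryGroup (Fin n) ℂ} (hxy : IsConj x y) (hx : x ∈ wordValuesIn w (SU n)) :
    y ∈ wordValuesIn w (SU n) := by
  obtain ⟨c, rfl⟩ := isConj_iff.mp hxy
  exact map_mem_wordValuesIn (φ := (MulAut.conj c).toMonoidHom)
    (fun U hU ↦ (mem_SU_iff_of_isConj (isConj_iff.mpr ⟨c, rfl⟩)).mp hU) hx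

end FreeGroup

section RankOneProjections

variable {ι : Type*}

theorem prod_vecMulVec_ne_zero {α R n : Type*} [CommSemiring R] [IsCancelMulZero R] [Fintype n]
    [DecidableEq n] {u v : α → n → R} (hu : ∀ x, u x ≠ 0) (hv : ∀ x, v x ≠ 0) {l : List α}
    (hl : l ≠ []) (h : l.IsChain fun x y ↦ v x ⬝ᵥ u y ≠ 0) :
    (l.map fun x ↦ vecMulVec (u x) (v x)).prod ≠ 0 := by
  obtain ⟨x, l, rfl⟩ := List.exists_cons_of_ne_nil hl
  clear hl
  suffices ∃ y : n → R, y ≠ 0 ∧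
      ((x :: l).map fun x ↦ vecMulVec (u x) (v x)).prod = vecMulVec (u x) y by
    obtain ⟨y, hy, hprod⟩ := this
    rw [hprod]
    exact vecMulVec_ne_zero (hu x) hy
  induction l generalizing x with
  | nil => exact ⟨v x, hv x, by simp⟩
  | cons x' l ih =>
    obtain ⟨hxx', hl⟩ := List.isChain_cons_cons.mp h
    obtain ⟨y, hy, hprod⟩ := ih x' hl
    refine ⟨(v x ⬝ᵥ u x') • y, smul_ne_zero hxx' hy, ?_⟩
    rw [List.map_cons, List.prod_cons, hprod, vecMulVec_mul_vecMulVec]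

variable (K : ι → unitaryGroup (Fin 2) ℂ)

/-- The orthogonal projection onto the line spanned by one of the two columns of the unitary matrix
`K i`; the letter `(i, b)` of a free group selects `K i` and the column. -/
def letterProjection (x : ι × Bool) : Matrix (Fin 2) (Fin 2) ℂ :=
  (K x.1 : Matrix (Fin 2) (Fin 2) ℂ) * single (finTwoEquiv.symm x.2) (finTwoEquiv.symm x.2) 1 *
    star (K x.1 : Matrix (Fin 2) (Fin 2) ℂ)

variable {K}

theorem prod_letterProjection_ne_zero
    (hK : Pairwise fun i j ↦ ∀ a b, ((K i)⁻¹ * K j).1 a b ≠ 0)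
    {l : List (ι × Bool)} (hl : l ≠ []) (h : FreeGroup.IsReduced l) :
    (l.map (letterProjection K)).prod ≠ 0 := by
  let e (x : ι × Bool) : Fin 2 → ℂ := Pi.single (finTwoEquiv.symm x.2) 1
  let u (x : ι × Bool) : Fin 2 → ℂ := (K x.1 : Matrix _ _ ℂ) *ᵥ e x
  let v (x : ι × Bool) : Fin 2 → ℂ := e x ᵥ* star (K x.1 : Matrix _ _ ℂ)
  have letterProjection_eq : letterProjection K = fun x ↦ vecMulVec (u x) (v x) := by
    ext1 x
    rw [letterProjection, single_eq_single_vecMulVec_single, mul_vecMulVec, vecMulVec_mul]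
  have dotProduct_eq (x y) : v x ⬝ᵥ u y =
      ((K x.1)⁻¹ * K y.1).1 (finTwoEquiv.symm x.2) (finTwoEquiv.symm y.2) := by
    rw [dotProduct_mulVec, vecMul_vecMul, ← dotProduct_mulVec]
    simp [e]
  have dotProduct_self (x) : v x ⬝ᵥ u x = 1 := by simp [dotProduct_eq]
  rw [letterProjection_eq]
  refine prod_vecMulVec_ne_zero (fun x hx ↦ ?_) (fun x hx ↦ ?_) hl (h.imp fun x y hxy ↦ ?_)
  · simpa [hx] using dotProduct_self x
  · simpa [hx] using dotProduct_self x
  · by_cases hi : x.1 = y.1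
    · rw [show x = y from Prod.ext hi (hxy hi), dotProduct_self]
      exact one_ne_zero
    · rw [dotProduct_eq]
      exact hK hi _ _

end RankOneProjections

section SUTwo

/-- The maximal torus of `SU(2)`, consisting of the matrices `diag(z, z⁻¹)`. -/
noncomputable def maximalTorus : Circle →* unitaryGroup (Fin 2) ℂ :=
  diagonalUnitary.comp
    { toFun := fun z ↦ ![z, z⁻¹]
      map_one' := by
        ext i
        fin_cases i <;> simp
      map_mul' := fun z w ↦ by
        ext i
        fin_cases i <;> simp [mul_comm] }

theorem maximalTorus_apply (z : Circle) : maximalTorus z = diagonalUnitary ![z, z⁻¹] :=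
  rfl

theorem coe_maximalTorus (z : Circle) :
    (maximalTorus z : Matrix (Fin 2) (Fin 2) ℂ) = diagonal ![(z : ℂ), (z : ℂ)⁻¹] := by
  rw [maximalTorus_apply, coe_diagonalUnitary]
  congr 1 with i
  fin_cases i <;> simp

theorem maximalTorus_mem_SU (z : Circle) : maximalTorus z ∈ SU 2 :=
  diagonalUnitary_mem_SU_iff.mpr <| by simp

theorem continuous_maximalTorus : Continuous maximalTorus :=
  continuous_diagonalUnitary.comp <| by
    change Continuous fun z : Circle ↦ ![z, z⁻¹]
    fun_prop

open scoped ComplexOrder in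
theorem eq_one_of_card_le_re_trace {n : Type*} [Fintype n] [DecidableEq n] {U : unitaryGroup n ℂ}
    (hU : Fintype.card n ≤ U.1.trace.re) : U = 1 := by
  set A : Matrix n n ℂ := U.1 - 1 with A_def
  have conjTranspose_mul_self : Aᴴ * A = -(A + Aᴴ) := by
    rw [← star_eq_conjTranspose, A_def, star_sub, star_one, sub_mul, mul_sub,
      Unitary.coe_star_mul_self, mul_one, one_mul]
    abel
  have trace_eq : (Aᴴ * A).trace = ((-(2 * A.trace.re) : ℝ) : ℂ) := by
    rw [conjTranspose_mul_self, trace_neg, trace_add, trace_conjTranspose, Complex.ofReal_neg,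
      ← Complex.add_conj]
    rfl
  have trace_re_nonneg : 0 ≤ A.trace.re := by simpa [A_def] using hU
  have trace_eq_zero : (Aᴴ * A).trace = 0 := by
    refine le_antisymm ?_ (posSemidef_conjTranspose_mul_self A).trace_nonneg
    rw [trace_eq]
    exact_mod_cast (by linarith : -(2 * A.trace.re) ≤ 0)
  exact Subtype.ext <| sub_eq_zero.mp <| trace_conjTranspose_mul_self_eq_zero_iff.mp trace_eq_zero

theorem trace_im_eq_zero_of_mem_SU_two {U : unitaryGroup (Fin 2) ℂ} (hU : U ∈ SU 2) :
    U.1.trace.im = 0 := by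
  have star_eq_adjugate : star U.1 = U.1.adjugate := by
    calc
      star U.1
      _ = star U.1 * (U.1 * U.1.adjugate) := by
        rw [mul_adjugate, show U.1.det = 1 from hU, one_smul, mul_one]
      _ = U.1.adjugate := by rw [← mul_assoc, Unitary.coe_star_mul_self, one_mul]
  refine Complex.conj_eq_iff_im.mp ?_
  calc
    star U.1.trace
    _ = U.1.adjugate.trace := by
      rw [← star_eq_adjugate, star_eq_conjTranspose, trace_conjTranspose]
    _ = U.1.trace := by simp [trace_fin_two, adjugate_fin_two, add_comm]

theorem isConj_maximalTorus_of_re_trace_eq {U : unitaryGroup (Fin 2) ℂ} (hU : U ∈ SU 2)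
    {z : Circle} (h : U.1.trace.re = 2 * (z : ℂ).re) : IsConj (maximalTorus z) U := by
  have re_trace_maximalTorus : (maximalTorus z).1.trace.re = 2 * (z : ℂ).re := by
    simp [coe_maximalTorus, two_mul]
  have trace_eq : (maximalTorus z).1.trace = U.1.trace :=
    Complex.ext (re_trace_maximalTorus.trans h.symm) <| by
      rw [trace_im_eq_zero_of_mem_SU_two hU, trace_im_eq_zero_of_mem_SU_two (maximalTorus_mem_SU z)]
  have det_eq : (maximalTorus z).1.det = U.1.det := (maximalTorus_mem_SU z).trans hU.symm
  exact isConj_of_charpoly_eq <| by rw [charpoly_fin_two, charpoly_fin_two, trace_eq, det_eq]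

/-- The rotation of the plane by the angle `α`, as a complex unitary matrix. -/
noncomputable def planeRotation (α : ℝ) : unitaryGroup (Fin 2) ℂ :=
  ⟨!![(cos α : ℂ), -sin α; sin α, cos α], mem_unitaryGroup_iff.mpr <| by
    ext i j
    fin_cases i <;> fin_cases j <;>
      simp [mul_apply, ← Complex.cos_conj, ← Complex.sin_conj, mul_comm, ← sq]⟩

theorem inv_planeRotation_mul_planeRotation (α β : ℝ) :
    (planeRotation α)⁻¹ * planeRotation β = planeRotation (β - α) := by
  have star_eq : star (planeRotation α).1 = !![(cos α : ℂ), sin α; -sin α, cos α] := by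
    ext i j
    fin_cases i <;> fin_cases j <;>
      simp [planeRotation, ← Complex.cos_conj, ← Complex.sin_conj]
  refine Subtype.ext ?_
  change star (planeRotation α).1 * !![(cos β : ℂ), -sin β; sin β, cos β] =
    !![(cos (β - α) : ℂ), -sin (β - α); sin (β - α), cos (β - α)]
  rw [star_eq, mul_fin_two, cos_sub, sin_sub]
  push_cast
  ring_nf

theorem planeRotation_apply_ne_zero {α : ℝ} (hα : α ∈ Set.Ioo (-(π / 2)) (π / 2)) (hα0 : α ≠ 0)
    (a b : Fin 2) : (planeRotation α : Matrix (Fin 2) (Fin 2) ℂ) a b ≠ 0 := by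
  have cos_ne_zero : cos α ≠ 0 := (cos_pos_of_mem_Ioo hα).ne'
  have sin_ne_zero : sin α ≠ 0 := by
    rwa [Ne, sin_eq_zero_iff_of_lt_of_lt (by linarith [hα.1, pi_pos]) (by linarith [hα.2, pi_pos])]
  fin_cases a <;> fin_cases b <;>
    simp [planeRotation, -Complex.ofReal_cos, -Complex.ofReal_sin, cos_ne_zero, sin_ne_zero]

theorem pairwise_inv_mul_planeRotation_ne_zero : Pairwise fun i j : ℕ ↦
    ∀ a b, ((planeRotation (arctan i))⁻¹ * planeRotation (arctan j)).1 a b ≠ 0 := by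
  intro i j hij
  have arctan_mem (k : ℕ) : arctan k ∈ Set.Ico 0 (π / 2) :=
    ⟨arctan_nonneg.mpr k.cast_nonneg, arctan_lt_pi_div_two k⟩
  rw [inv_planeRotation_mul_planeRotation]
  refine planeRotation_apply_ne_zero ⟨?_, ?_⟩ ?_
  · linarith [(arctan_mem i).2, (arctan_mem j).1]
  · linarith [(arctan_mem i).1, (arctan_mem j).2]
  · simpa [sub_eq_zero, arctan_inj] using hij.symm

end SUTwo

section WordValuesSUTwo

variable {ι : Type*} {K : ι → unitaryGroup (Fin 2) ℂ}

theorem smul_conj_maximalTorus_eq (z : Circle) (x : ι × Bool) :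
    (z : ℂ) • (cond x.2 (MulAut.conj (K x.1) (maximalTorus z))
      (MulAut.conj (K x.1) (maximalTorus z))⁻¹).1 =
        letterProjection K x + (z : ℂ) ^ 2 • (1 - letterProjection K x) := by
  obtain ⟨i, b⟩ := x
  let E : Matrix (Fin 2) (Fin 2) ℂ := single (finTwoEquiv.symm b) (finTwoEquiv.symm b) 1
  have smul_maximalTorus_eq : (z : ℂ) • (cond b (maximalTorus z) (maximalTorus z)⁻¹).1 =
      E + (z : ℂ) ^ 2 • (1 - E) := by
    rw [← map_inv]
    cases b <;> ext j k <;> fin_cases j <;> fin_cases k <;>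
      simp [coe_maximalTorus, E, finTwoEquiv, sq, -map_inv, Circle.coe_inv]
  have K_mul_star : (K i).1 * star (K i).1 = 1 := Unitary.coe_mul_star_self (K i)
  calc
    (z : ℂ) • (cond b (MulAut.conj (K i) (maximalTorus z))
      (MulAut.conj (K i) (maximalTorus z))⁻¹).1
    _ = (K i).1 * ((z : ℂ) • (cond b (maximalTorus z) (maximalTorus z)⁻¹).1) * star (K i).1 := by
      rw [mul_smul_comm, smul_mul_assoc, ← map_inv, ← Bool.apply_cond (MulAut.conj (K i))]
      rfl
    _ = (K i).1 * E * star (K i).1 + (z : ℂ) ^ 2 • (1 - (K i).1 * E * star (K i).1) := by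
      simp only [smul_maximalTorus_eq, mul_add, add_mul, mul_sub, sub_mul, mul_smul_comm,
        smul_mul_assoc, mul_one, K_mul_star]

-- If the word were trivial at all `K i * diag(z, z⁻¹) * (K i)⁻¹`, then the polynomial `F` below,
-- being `z ^ length` on the unit circle, would be so at `z = 0` by the maximum principle; but `F 0`
-- is a nonzero product of rank-one projections.
open scoped Matrix.Norms.L2Operator in
theorem exists_lift_conj_maximalTorus_ne_one
    (hK : Pairwise fun i j ↦ ∀ a b, ((K i)⁻¹ * K j).1 a b ≠ 0)
    {w : FreeGroup ι} (hw : w ≠ 1) :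
    ∃ z : Circle, FreeGroup.lift (fun i ↦ MulAut.conj (K i) (maximalTorus z)) w ≠ 1 := by
  classical
  by_contra! h
  let F (z : ℂ) : Matrix (Fin 2) (Fin 2) ℂ :=
    (w.toWord.map fun x ↦ letterProjection K x + z ^ 2 • (1 - letterProjection K x)).prod
  let G (z : ℂ) : Matrix (Fin 2) (Fin 2) ℂ := z ^ w.toWord.length • 1
  have F_eq_G_of_circle (z : Circle) : F z = G z := by
    have lift_eq := congrArg (unitaryGroup (Fin 2) ℂ).subtype (h z)
    rw [← FreeGroup.mk_toWord (x := w), FreeGroup.lift_mk, map_list_prod, List.map_map, map_one]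
      at lift_eq
    simp only [F, G, ← smul_conj_maximalTorus_eq]
    rw [← lift_eq, ← List.length_map, List.smul_prod, List.map_map]
    rfl
  have differentiable_F : Differentiable ℂ F := by
    have differentiable_factor (x : ι × Bool) : Differentiable ℂ fun z : ℂ ↦
      letterProjection K x + z ^ 2 • (1 - letterProjection K x) := by fun_prop
    exact fun z ↦ (HasFDerivAt.list_prod' fun x _ ↦
      (differentiable_factor x z).hasFDerivAt).differentiableAt
  have differentiable_G : Differentiable ℂ G := by fun_prop
  have eqOn_ball : Set.EqOn F G (Metric.ball 0 1) :=
    Complex.eqOn_of_eqOn_frontier Metric.isBounded_ball differentiable_F.diffContOnCl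
      differentiable_G.diffContOnCl fun z hz ↦
        F_eq_G_of_circle ⟨z, mem_sphere_zero_iff_norm.mpr <| by simpa [frontier_ball] using hz⟩
  have F_zero : F 0 = 0 := by
    simpa [G, hw] using eqOn_ball (Metric.mem_ball_self one_pos)
  refine prod_letterProjection_ne_zero hK (mt FreeGroup.toWord_eq_nil_iff.mp hw)
    FreeGroup.isReduced_toWord ?_
  simpa [F] using F_zero

theorem eventually_maximalTorus_mem_wordValuesIn {d : ℕ} {w : FreeGroup (Fin d)} (hw : w ≠ 1) :
    ∀ᶠ z : Circle in 𝓝 1, maximalTorus z ∈ wordValuesIn w (SU 2) := by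
  let g (z : Circle) (i : Fin d) : unitaryGroup (Fin 2) ℂ :=
    MulAut.conj (planeRotation (arctan i)) (maximalTorus z)
  let f (z : Circle) : ℝ := (FreeGroup.lift (g z) w).1.trace.re
  have lift_mem (z : Circle) : FreeGroup.lift (g z) w ∈ wordValuesIn w (SU 2) :=
    ⟨g z, fun i ↦ (mem_SU_iff_of_isConj (isConj_iff.mpr ⟨_, rfl⟩)).mp (maximalTorus_mem_SU z), rfl⟩
  have continuous_f : Continuous f := by
    have continuous_g : Continuous g := by
      simp only [g, MulAut.conj_apply]
      have := continuous_maximalTorus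
      fun_prop
    exact Complex.continuous_re.comp
      (continuous_subtype_val.comp (continuous_freeGroup_lift continuous_g w)).matrix_trace
  have f_one : f 1 = 2 := by
    have g_one : g 1 = 1 := by
      ext i
      simp [g]
    have lift_one : FreeGroup.lift (1 : Fin d → unitaryGroup (Fin 2) ℂ) = 1 := by
      ext i
      simp
    simp [f, g_one, lift_one]
  obtain ⟨z₀, hz₀⟩ : ∃ z₀, f z₀ < 2 := by
    obtain ⟨z₀, hz₀⟩ := exists_lift_conj_maximalTorus_ne_one
      (pairwise_inv_mul_planeRotation_ne_zero.comp_of_injective Fin.val_injective) hw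
    exact ⟨z₀, lt_of_not_ge fun h ↦ hz₀ <| eq_one_of_card_le_re_trace <| by
      simpa only [Fintype.card_fin, Nat.cast_ofNat] using h⟩
  have eventually_lt : ∀ᶠ z : Circle in 𝓝 1, f z₀ < 2 * (z : ℂ).re :=
    ContinuousAt.eventually_lt continuousAt_const (by fun_prop) (by simpa using hz₀)
  filter_upwards [eventually_lt] with z hz
  have two_mul_re_le : 2 * (z : ℂ).re ≤ f 1 := by
    rw [f_one]
    linarith [Complex.re_le_norm z, Circle.norm_coe z]
  obtain ⟨z', hz'⟩ :=
    mem_range_of_exists_le_of_exists_ge continuous_f ⟨z₀, hz.le⟩ ⟨1, two_mul_re_le⟩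
  exact mem_wordValuesIn_SU_of_isConj (isConj_maximalTorus_of_re_trace_eq
    (wordValuesIn_SU_subset w (lift_mem z')) hz').symm (lift_mem z')

theorem eventually_twistedCycle_mem_wordValuesIn {d : ℕ} {w : FreeGroup (Fin d)} (hw : w ≠ 1) :
    ∀ᶠ m in atTop, twistedCycle m ∈ wordValuesIn w (SU (m + 1)) := by
  have tendsto_div_add_one : Tendsto (fun m : ℕ ↦ π / (m + 1)) atTop (𝓝 0) := by
    simpa [Function.comp_def] using
      (tendsto_const_div_atTop_nhds_zero_nat π).comp (tendsto_add_atTop_nat 1)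
  have tendsto_exp : Tendsto (fun m : ℕ ↦ Circle.exp (π / (m + 1))) atTop (𝓝 1) := by
    rw [← Circle.exp_zero]
    exact (Circle.exp.continuous.tendsto 0).comp tendsto_div_add_one
  filter_upwards [tendsto_exp.eventually (eventually_maximalTorus_mem_wordValuesIn hw)] with m hm
  refine mem_wordValuesIn_SU_of_isConj (isConj_diagonalUnitary_twistedCycle m) ?_
  simpa [maximalTorus_apply, symPowerFinTwo_diagonalUnitary] using
    map_mem_wordValuesIn (mapsTo_symPowerFinTwo_SU (m := m)) hm

end WordValuesSUTwo

/-- For all nontrivial words `w₁, w₂`, there is `N` such that for all `n ≥ N`,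
`SU(n) = w₁(SU(n)) · w₂(SU(n))`. -/
theorem su_waring_two {d₁ d₂ : ℕ} (w₁ : FreeGroup (Fin d₁)) (w₂ : FreeGroup (Fin d₂))
    (hw₁ : w₁ ≠ 1) (hw₂ : w₂ ≠ 1) :
    ∃ N : ℕ, ∀ n : ℕ, N ≤ n → ∀ x ∈ SU n,
      ∃ g₁ ∈ wordValuesIn w₁ (SU n), ∃ g₂ ∈ wordValuesIn w₂ (SU n), x = g₁ * g₂ := by
  obtain ⟨N, hN⟩ := eventually_atTop.mp <| (eventually_twistedCycle_mem_wordValuesIn hw₁).and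
    (eventually_twistedCycle_mem_wordValuesIn (inv_ne_one.mpr hw₂))
  refine ⟨N + 1, fun n hn x hx ↦ ?_⟩
  obtain ⟨m, rfl⟩ := Nat.exists_eq_add_of_lt hn
  obtain ⟨mem_w₁, mem_w₂⟩ := hN (N + m) (Nat.le_add_right N m)
  obtain ⟨y, z, hy, hz, rfl⟩ := exists_eq_mul_inv_of_mem_SU hx
  exact ⟨y, mem_wordValuesIn_SU_of_isConj hy mem_w₁, z⁻¹,
    inv_mem_wordValuesIn (mem_wordValuesIn_SU_of_isConj hz mem_w₂), rfl⟩
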